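/- Fix τ ∈ ℍ, A ∈ ℂ and p ∈ ℂ with 2p ∉ Λ_τ, let n₀ = n₁ = n₂ = n₃ = 0, let B = A² − ζ(2p|τ)A − (3/4)℘(2p|τ), and let I(z;τ) = (3/4)(℘(z+p|τ) + ℘(z−p|τ)) + A(ζ(z+p|τ) − ζ(z−p|τ)) + B. Then the function Φ(z) = ζ(z+p|τ) − ζ(z−p|τ) − ζ(2p|τ) − 2A is an even elliptic function with periods 1 and τ, and it satisfies the second symmetric power equation Φ‴(z) − 4I(z;τ)Φ′(z) − 2I′(z;τ)Φ(z) = 0 away from the singular set. -/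

import Mathlib

open Complex Filter Topology Asymptotics

noncomputable section

/-- membership in the lattice `Λ_τ = ℤ + τℤ`. -/
def InLattice (τ z : ℂ) : Prop := ∃ m n : ℤ, z = (m : ℂ) + (n : ℂ) * τ

/-- the half-period generators `ω₀ = 0, ω₁ = 1, ω₂ = τ, ω₃ = 1 + τ`. -/
def halfp (τ : ℂ) : Fin 4 → ℂ := ![0, 1, τ, 1 + τ]

/-- the Weierstrass elliptic function `℘(z|τ)`. -/
def wp (τ z : ℂ) : ℂ :=
  z⁻¹ ^ 2 + ∑' w : {w : ℤ × ℤ // w ≠ 0},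
    ((z - ((w.1.1 : ℂ) + (w.1.2 : ℂ) * τ))⁻¹ ^ 2 - ((w.1.1 : ℂ) + (w.1.2 : ℂ) * τ)⁻¹ ^ 2)

/-- `℘′(z|τ)`, the `z`-derivative of `℘`. -/
def wpd (τ z : ℂ) : ℂ := deriv (wp τ) z

/-- `℘″(z|τ)`. -/
def wpdd (τ z : ℂ) : ℂ := deriv (wpd τ) z

def e1 (τ : ℂ) : ℂ := wp τ (1 / 2)
def e2 (τ : ℂ) : ℂ := wp τ (τ / 2)
def e3 (τ : ℂ) : ℂ := wp τ ((1 + τ) / 2)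

def g2 (τ : ℂ) : ℂ := -4 * (e1 τ * e2 τ + e1 τ * e3 τ + e2 τ * e3 τ)

/-- `zeta` is the Weierstrass zeta function: for each `τ ∈ ℍ`, `zeta τ` is odd, satisfies
`∂ζ/∂z = -℘` off the lattice, and `ζ(z|τ) - 1/z → 0` as `z → 0`. -/
def IsWeierstrassZeta (zeta : ℂ → ℂ → ℂ) : Prop :=
  ∀ τ : ℂ, 0 < τ.im →
    (∀ z : ℂ, zeta τ (-z) = - zeta τ z) ∧
    (∀ z : ℂ, ¬ InLattice τ z → HasDerivAt (zeta τ) (- wp τ z) z) ∧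
    Tendsto (fun z => zeta τ z - z⁻¹) (𝓝[≠] (0 : ℂ)) (𝓝 0)

/-- `eta1 τ = ζ(z+1|τ) - ζ(z|τ)` is the first quasi-period. -/
def IsEta1 (zeta : ℂ → ℂ → ℂ) (eta1 : ℂ → ℂ) : Prop :=
  ∀ τ : ℂ, 0 < τ.im → ∀ z : ℂ, ¬ InLattice τ z →
    eta1 τ = zeta τ (z + 1) - zeta τ z

/-- `eta2 τ = ζ(z+τ|τ) - ζ(z|τ)` is the second quasi-period. -/
def IsEta2 (zeta : ℂ → ℂ → ℂ) (eta2 : ℂ → ℂ) : Prop :=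
  ∀ τ : ℂ, 0 < τ.im → ∀ z : ℂ, ¬ InLattice τ z →
    eta2 τ = zeta τ (z + τ) - zeta τ z

/-- `sigma` is the Weierstrass sigma function: entire, odd, with
`∂/∂z log σ = ζ` off the lattice and `σ(z|τ)/z → 1` as `z → 0`. -/
def IsWeierstrassSigma (zeta sigma : ℂ → ℂ → ℂ) : Prop :=
  ∀ τ : ℂ, 0 < τ.im →
    (∀ z : ℂ, sigma τ (-z) = - sigma τ z) ∧
    Differentiable ℂ (sigma τ) ∧
    (∀ z : ℂ, ¬ InLattice τ z → HasDerivAt (sigma τ) (zeta τ z * sigma τ z) z) ∧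
    Tendsto (fun z => sigma τ z / z) (𝓝[≠] (0 : ℂ)) (𝓝 1)

/-- the Hamiltonian system (142) for `(p(τ), A(τ))` on `V`. -/
def HamSystem (n : Fin 4 → ℂ) (zeta : ℂ → ℂ → ℂ) (eta1 : ℂ → ℂ)
    (V : Set ℂ) (p A : ℂ → ℂ) : Prop :=
  ∀ τ ∈ V,
    HasDerivAt p ((-Complex.I / (4 * (Real.pi : ℂ))) *
      (2 * A τ - zeta τ (2 * p τ) + 2 * p τ * eta1 τ)) τ ∧
    HasDerivAt A ((Complex.I / (4 * (Real.pi : ℂ))) *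
      ((2 * wp τ (2 * p τ) + 2 * eta1 τ) * A τ - (3 / 2) * wpd τ (2 * p τ)
        - ∑ k : Fin 4, n k * (n k + 1) * wpd τ (p τ + halfp τ k / 2))) τ

/-- the generalized Lamé potential `I(z;τ)`. -/
def Ipot (n : Fin 4 → ℂ) (zeta : ℂ → ℂ → ℂ) (A B p τ z : ℂ) : ℂ :=
  (∑ k : Fin 4, n k * (n k + 1) * wp τ (z + halfp τ k / 2))
    + (3 / 4) * (wp τ (z + p) + wp τ (z - p))
    + A * (zeta τ (z + p) - zeta τ (z - p)) + B

end

/-!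
For the Weierstrass zeta function and a fixed `w`, the additivity defect
`f v = ζ (v + w) - ζ v - ζ w` is elliptic, invariant under `v ↦ -w - v`, and satisfies the addition
theorem `f² = ℘ (v + w) + ℘ v + ℘ w`: the difference of the two sides is elliptic, its
singularities are removable, and it tends to `0` at the origin, so it vanishes by Liouville's
theorem. Together with `℘″ = 6 ℘² - g₂ / 2` this gives `f‴ = 6 f′ (f² - ℘ w)`.
With `w = 2 p` and `v = z - p` one has `Φ = f - 2 A`, while the potential is the quadratic
polynomial `3/4 f² + A f + A² - 3/2 ℘ (2 p)` in `f`, so that the second symmetric power equation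
reduces to a polynomial identity in `f` and its derivative.
-/

open scoped PeriodPair

section RemovableSingularities

variable {E : Type*} [NormedAddCommGroup E] [NormedSpace ℂ E] [CompleteSpace E]

theorem hasDerivAt_of_eventually_hasDerivAt_nhdsNE {f g : ℂ → E} {c : ℂ} (hf : ContinuousAt f c)
    (hg : ContinuousAt g c) (h : ∀ᶠ z in 𝓝[≠] c, HasDerivAt f (g z) z) :
    HasDerivAt f (g c) c := by
  have hfc : AnalyticAt ℂ f c :=
    analyticAt_of_differentiable_on_punctured_nhds_of_continuousAt
      (h.mono fun z hz ↦ hz.differentiableAt) hf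
  have hlim : Tendsto g (𝓝[≠] c) (𝓝 (deriv f c)) :=
    (hfc.deriv.continuousAt.mono_left nhdsWithin_le_nhds).congr' (h.mono fun z hz ↦ hz.deriv)
  rw [tendsto_nhds_unique (hg.mono_left nhdsWithin_le_nhds) hlim]
  exact hfc.differentiableAt.hasDerivAt

theorem exists_differentiable_tendsto_nhdsNE {f : ℂ → E}
    (hf : ∀ z, ∀ᶠ w in 𝓝[≠] z, DifferentiableAt ℂ f w)
    (hlim : ∀ z, ∃ a, Tendsto f (𝓝[≠] z) (𝓝 a)) :
    ∃ g : ℂ → E, Differentiable ℂ g ∧ ∀ z, Tendsto f (𝓝[≠] z) (𝓝 (g z)) := by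
  choose g hg using hlim
  have hgf {w : ℂ} (hw : DifferentiableAt ℂ f w) : g w = f w :=
    tendsto_nhds_unique (hg w) (hw.continuousAt.mono_left nhdsWithin_le_nhds)
  have hgf_ev (z : ℂ) : ∀ᶠ w in 𝓝[≠] z, g =ᶠ[𝓝 w] f := by
    filter_upwards [hf z] with w hw
    exact (eventually_nhdsWithin_iff.1 (hf w)).mono fun x hx ↦
      hgf ((eq_or_ne x w).elim (fun h ↦ h ▸ hw) hx)
  refine ⟨g, fun z ↦ ?_, hg⟩
  have hgz : ContinuousAt g z := continuousAt_iff_punctured_nhds.2 <|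
    (hg z).congr' ((hgf_ev z).mono fun w hw ↦ hw.eq_of_nhds.symm)
  refine (analyticAt_of_differentiable_on_punctured_nhds_of_continuousAt ?_ hgz).differentiableAt
  filter_upwards [hf z, hgf_ev z] with w hw hgw
  exact hw.congr_of_eventuallyEq hgw

theorem exists_tendsto_nhdsNE_of_periodic (Λ : Submodule ℤ ℂ) [DiscreteTopology Λ] [IsZLattice ℝ Λ]
    {f : ℂ → E} (hf : ∀ z, ∀ᶠ w in 𝓝[≠] z, DifferentiableAt ℂ f w)
    (hlim : ∀ z, ∃ a, Tendsto f (𝓝[≠] z) (𝓝 a))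
    (hper : ∀ z, ∀ l ∈ Λ, ∀ᶠ w in 𝓝[≠] z, f (w + l) = f w) :
    ∃ c, ∀ z, Tendsto f (𝓝[≠] z) (𝓝 c) := by
  obtain ⟨g, hg, hfg⟩ := exists_differentiable_tendsto_nhdsNE hf hlim
  have hg_per (z l : ℂ) (hl : l ∈ Λ) : g (z + l) = g z := by
    have hshift : Tendsto (fun w ↦ f (w + l)) (𝓝[≠] z) (𝓝 (g (z + l))) :=
      (hfg (z + l)).comp map_add_right_nhdsNE.le
    exact tendsto_nhds_unique (hshift.congr' (hper z l hl)) (hfg z)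
  obtain ⟨c, hc⟩ := hg.exists_const_forall_eq_of_bounded
    (IsZLattice.isCompact_range_of_periodic Λ g hg.continuous hg_per).isBounded
  exact ⟨c, fun z ↦ hc z ▸ hfg z⟩

end RemovableSingularities

section WeierstrassP

variable (L : PeriodPair)

theorem eventually_nhdsNE_notMem_lattice (z : ℂ) : ∀ᶠ w in 𝓝[≠] z, w ∉ L.lattice :=
  eventually_nhdsWithin_iff.2 <|
    mem_of_superset (L.compl_lattice_sdiff_singleton_mem_nhds z) fun _ hw hwz hmem ↦ hw ⟨hmem, hwz⟩

theorem isPreconnected_compl_lattice : IsPreconnected (L.lattice : Set ℂ)ᶜ :=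
  have : Countable L.lattice := L.latticeEquivProd.toEquiv.countable_iff.2 inferInstance
  ((Set.to_countable (L.lattice : Set ℂ)).isConnected_compl_of_one_lt_rank
    (by simp)).isPreconnected

variable {L}

theorem eventually_notMem_lattice_and_add {v w : ℂ} (hv : v ∉ L.lattice)
    (hvw : v + w ∉ L.lattice) :
    ∀ᶠ x in 𝓝 v, x ∉ L.lattice ∧ x + w ∉ L.lattice :=
  have hopen := L.isClosed_lattice.isOpen_compl
  (hopen.eventually_mem hv).and
    ((hopen.preimage (continuous_add_const w)).eventually_mem hvw)

theorem hasDerivAt_weierstrassP {z : ℂ} (hz : z ∉ L.lattice) : HasDerivAt ℘[L] (℘'[L] z) z := by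
  rw [← L.deriv_weierstrassP]
  exact (L.analyticOnNhd_weierstrassP z hz).differentiableAt.hasDerivAt

variable (L)

theorem weierstrassP_eq_inv_sq_add (z : ℂ) : ℘[L] z = z⁻¹ ^ 2 + L.weierstrassPExcept 0 z := by
  simpa [add_comm] using (L.weierstrassPExcept_add 0 z).symm

theorem tendsto_pow_three_mul_derivWeierstrassP :
    Tendsto (fun z ↦ z ^ 3 * ℘'[L] z) (𝓝[≠] 0) (𝓝 (-2)) := by
  have hcont : ContinuousAt (fun z ↦ z ^ 3 * L.derivWeierstrassPExcept 0 z - 2) 0 := by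
    have := (L.analyticAt_derivWeierstrassPExcept 0).continuousAt
    fun_prop
  have hlim : Tendsto (fun z ↦ z ^ 3 * L.derivWeierstrassPExcept 0 z - 2) (𝓝[≠] 0) (𝓝 (-2)) := by
    simpa using hcont.tendsto.mono_left nhdsWithin_le_nhds
  refine hlim.congr' (eventually_nhdsWithin_of_forall fun z (hz : z ≠ 0) ↦ ?_)
  have hsub : L.derivWeierstrassPExcept 0 z - 2 / z ^ 3 = ℘'[L] z := by
    simpa using L.derivWeierstrassPExcept_sub 0 z
  simp only [← hsub]
  field_simp

theorem exists_derivWeierstrassP_ne_zero : ∃ z ∉ L.lattice, ℘'[L] z ≠ 0 := by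
  have hne : ∀ᶠ z in 𝓝[≠] 0, z ^ 3 * ℘'[L] z ≠ 0 :=
    (tendsto_pow_three_mul_derivWeierstrassP L).eventually_ne (by norm_num)
  obtain ⟨z, hz, hz'⟩ := (hne.and (eventually_nhdsNE_notMem_lattice L 0)).exists
  exact ⟨z, hz', right_ne_zero_of_mul hz⟩

variable {L}

theorem hasDerivAt_derivWeierstrassP {z : ℂ} (hz : z ∉ L.lattice) :
    HasDerivAt ℘'[L] (6 * ℘[L] z ^ 2 - L.g₂ / 2) z := by
  have hP := L.analyticOnNhd_weierstrassP
  have hP' := L.analyticOnNhd_derivWeierstrassP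
  let Q : ℂ → ℂ := fun z ↦ deriv ℘'[L] z - (6 * ℘[L] z ^ 2 - L.g₂ / 2)
  have hQ : AnalyticOnNhd ℂ Q (L.lattice : Set ℂ)ᶜ := by
    intro x hx
    have := hP x hx
    have := hP'.deriv x hx
    fun_prop
  -- The derivative of `℘'² = 4 ℘³ - g₂ ℘ - g₃` is the claim multiplied by `2 ℘'`, a factor that can
  -- be cancelled because analytic functions on a connected open set form an integral domain.
  have hmul : ∀ x ∈ (L.lattice : Set ℂ)ᶜ, ℘'[L] x * Q x = 0 := by
    intro x hx
    have hode : (fun z ↦ ℘'[L] z ^ 2) =ᶠ[𝓝 x] fun z ↦ 4 * ℘[L] z ^ 3 - L.g₂ * ℘[L] z - L.g₃ :=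
      (L.isClosed_lattice.isOpen_compl.eventually_mem hx).mono L.derivWeierstrassP_sq
    have hlhs := (hP' x hx).differentiableAt.hasDerivAt.pow 2
    have hd := hasDerivAt_weierstrassP hx
    have hrhs := (((hd.pow 3).const_mul 4).sub (hd.const_mul L.g₂)).sub_const L.g₃
    have hode_deriv : 2 * ℘'[L] x * deriv ℘'[L] x =
        4 * (3 * ℘[L] x ^ 2 * ℘'[L] x) - L.g₂ * ℘'[L] x := by
      simpa using hlhs.unique (hrhs.congr_of_eventuallyEq hode)
    simp only [Q]
    linear_combination hode_deriv / 2
  obtain ⟨x, hx, hx'⟩ := exists_derivWeierstrassP_ne_zero L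
  have hQ0 : Q z = 0 := (hP'.eq_zero_or_eq_zero_of_mul_eq_zero hQ hmul
    (isPreconnected_compl_lattice L)).resolve_left (fun h ↦ hx' (h x hx)) z hz
  rw [← sub_eq_zero.1 hQ0]
  exact (hP' z hz).differentiableAt.hasDerivAt

end WeierstrassP

section AdditivityDefect

variable {G H : Type*}

/-- The failure of `f` to be additive at the pair `(v, w)`. For the Weierstrass zeta function this
is the elliptic function of `v` underlying the addition theorem. -/
def additivityDefect [Add G] [Sub H] (f : G → H) (v w : G) : H :=
  f (v + w) - f v - f w

theorem additivityDefect_neg_sub [AddCommGroup G] [AddCommGroup H] {f : G → H}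
    (hf : ∀ x, f (-x) = -f x) (v w : G) :
    additivityDefect f (-w - v) w = additivityDefect f v w := by
  have h₁ : -w - v + w = -v := by abel
  have h₂ : -w - v = -(v + w) := by abel
  rw [additivityDefect, additivityDefect, h₁, h₂, hf, hf]
  abel

end AdditivityDefect

/-- `Z` is the Weierstrass zeta function of the lattice of `L`: the condition `IsWeierstrassZeta`
for a single, arbitrary lattice. The values at lattice points are only asked to be odd. -/
structure IsZetaOf (L : PeriodPair) (Z : ℂ → ℂ) : Prop where
  neg : ∀ z, Z (-z) = -Z z
  hasDerivAt : ∀ z ∉ L.lattice, HasDerivAt Z (-℘[L] z) z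
  tendsto_sub_inv : Tendsto (fun z ↦ Z z - z⁻¹) (𝓝[≠] 0) (𝓝 0)

/-- The difference between the two sides of the addition theorem
`(ζ (v + w) - ζ v - ζ w)² = ℘ (v + w) + ℘ v + ℘ w`, to which Liouville's theorem is applied as a
function of `v`. -/
noncomputable def additionError (L : PeriodPair) (Z : ℂ → ℂ) (v w : ℂ) : ℂ :=
  additivityDefect Z v w ^ 2 - (℘[L] (v + w) + ℘[L] v + ℘[L] w)

namespace IsZetaOf

variable {L : PeriodPair} {Z : ℂ → ℂ}

theorem exists_quasiPeriod (hZ : IsZetaOf L Z) {l : ℂ} (hl : l ∈ L.lattice) :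
    ∃ η, ∀ z ∉ L.lattice, Z (z + l) = Z z + η := by
  have hd (z : ℂ) (hz : z ∉ L.lattice) : HasDerivAt (fun z ↦ Z (z + l)) (-℘[L] z) z := by
    rw [← L.weierstrassP_add_coe z ⟨l, hl⟩]
    exact (hZ.hasDerivAt (z + l) ((L.lattice.add_mem_iff_left hl).not.2 hz)).comp_add_const z l
  exact L.isClosed_lattice.isOpen_compl.exists_eq_add_of_deriv_eq (isPreconnected_compl_lattice L)
    (fun z hz ↦ (hd z hz).differentiableAt.differentiableWithinAt)
    (fun z hz ↦ (hZ.hasDerivAt z hz).differentiableAt.differentiableWithinAt)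
    (fun z hz ↦ (hd z hz).deriv.trans (hZ.hasDerivAt z hz).deriv.symm)

theorem map_zero (hZ : IsZetaOf L Z) : Z 0 = 0 :=
  self_eq_neg.1 (by simpa using hZ.neg 0)

theorem hasDerivAt_sub_inv_zero (hZ : IsZetaOf L Z) : HasDerivAt (fun z ↦ Z z - z⁻¹) 0 0 := by
  -- The junk value `0⁻¹ = 0` and `Z 0 = 0` make the regular part of `Z` continuous at `0`.
  have hcont : ContinuousAt (fun z ↦ Z z - z⁻¹) 0 :=
    continuousAt_iff_punctured_nhds.2 (by simpa [hZ.map_zero] using hZ.tendsto_sub_inv)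
  have hd : ∀ᶠ z in 𝓝[≠] 0, HasDerivAt (fun z ↦ Z z - z⁻¹) (-L.weierstrassPExcept 0 z) z := by
    filter_upwards [self_mem_nhdsWithin, eventually_nhdsNE_notMem_lattice L 0] with z hz hzL
    refine ((hZ.hasDerivAt z hzL).sub (hasDerivAt_inv hz)).congr_deriv ?_
    rw [weierstrassP_eq_inv_sq_add]
    ring
  simpa using hasDerivAt_of_eventually_hasDerivAt_nhdsNE hcont
    (L.analyticAt_weierstrassPExcept 0).continuousAt.neg hd

theorem hasDerivAt_additivityDefect (hZ : IsZetaOf L Z) {v w : ℂ} (hv : v ∉ L.lattice)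
    (hvw : v + w ∉ L.lattice) :
    HasDerivAt (additivityDefect Z · w) (℘[L] v - ℘[L] (v + w)) v :=
  ((((hZ.hasDerivAt _ hvw).comp_add_const v w).sub (hZ.hasDerivAt v hv)).sub_const
    (Z w)).congr_deriv (by ring)

theorem additivityDefect_add_mem (hZ : IsZetaOf L Z) {v w l : ℂ} (hl : l ∈ L.lattice)
    (hv : v ∉ L.lattice) (hvw : v + w ∉ L.lattice) :
    additivityDefect Z (v + l) w = additivityDefect Z v w := by
  obtain ⟨η, hη⟩ := hZ.exists_quasiPeriod hl
  rw [additivityDefect, additivityDefect, add_right_comm, hη v hv, hη _ hvw,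
    add_sub_add_right_eq_sub]

theorem additionError_neg_sub (hZ : IsZetaOf L Z) (v w : ℂ) :
    additionError L Z (-w - v) w = additionError L Z v w := by
  have h₁ : -w - v + w = -v := by ring
  have h₂ : -w - v = -(v + w) := by ring
  rw [additionError, additionError, additivityDefect_neg_sub hZ.neg, h₁, h₂, L.weierstrassP_neg,
    L.weierstrassP_neg, add_comm (℘[L] v)]

theorem additionError_add_mem (hZ : IsZetaOf L Z) {v w l : ℂ} (hl : l ∈ L.lattice)
    (hv : v ∉ L.lattice) (hvw : v + w ∉ L.lattice) :
    additionError L Z (v + l) w = additionError L Z v w := by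
  rw [additionError, additionError, hZ.additivityDefect_add_mem hl hv hvw, add_right_comm v l w,
    L.weierstrassP_add_coe v ⟨l, hl⟩, L.weierstrassP_add_coe (v + w) ⟨l, hl⟩]

theorem differentiableAt_additionError (hZ : IsZetaOf L Z) {v w : ℂ} (hv : v ∉ L.lattice)
    (hvw : v + w ∉ L.lattice) : DifferentiableAt ℂ (additionError L Z · w) v := by
  have hf := (hZ.hasDerivAt_additivityDefect hv hvw).differentiableAt
  have hP := (hasDerivAt_weierstrassP hv).differentiableAt
  have hPw := ((hasDerivAt_weierstrassP hvw).comp_add_const v w).differentiableAt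
  exact (hf.pow 2).sub ((hPw.add hP).add_const _)

theorem tendsto_additionError_zero (hZ : IsZetaOf L Z) {w : ℂ} (hw : w ∉ L.lattice) :
    Tendsto (additionError L Z · w) (𝓝[≠] 0) (𝓝 0) := by
  -- The additivity defect is `u v - v⁻¹` with `u` regular at `0`.
  let u : ℂ → ℂ := fun v ↦ Z (v + w) - Z w - (Z v - v⁻¹)
  have hu : HasDerivAt u (-℘[L] w) 0 := by
    have hZw : HasDerivAt (fun v ↦ Z (v + w)) (-℘[L] w) 0 :=
      HasDerivAt.comp_add_const 0 w (by simpa using hZ.hasDerivAt w hw)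
    exact ((hZw.sub_const (Z w)).sub hZ.hasDerivAt_sub_inv_zero).congr_deriv (sub_zero _)
  have hu0 : u 0 = 0 := by simp [u, hZ.map_zero]
  let F : ℂ → ℂ := fun v ↦
    u v ^ 2 - 2 * dslope u 0 v - (℘[L] (v + w) + L.weierstrassPExcept 0 v + ℘[L] w)
  have hF : ContinuousAt F 0 := by
    have hP : ContinuousAt (fun v ↦ ℘[L] (v + w)) 0 :=
      (HasDerivAt.comp_add_const 0 w (by simpa using hasDerivAt_weierstrassP hw)).continuousAt
    have hPE := (L.analyticAt_weierstrassPExcept 0).continuousAt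
    exact ((hu.continuousAt.pow 2).sub
      ((continuousAt_dslope_same.2 hu.differentiableAt).const_mul 2)).sub
      ((hP.add hPE).add_const _)
  have hF0 : F 0 = 0 := by
    simp only [F, hu0, dslope_same, hu.deriv, zero_add, L.weierstrassPExcept_zero]
    ring
  refine (hF0 ▸ hF.tendsto.mono_left nhdsWithin_le_nhds).congr'
    (eventually_nhdsWithin_of_forall fun v (hv : v ≠ 0) ↦ ?_)
  have hdefect : additivityDefect Z v w = u v - v⁻¹ := by
    simp only [additivityDefect, u]
    ring
  simp only [additionError, hdefect, weierstrassP_eq_inv_sq_add L v, F, dslope_of_ne _ hv,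
    slope_def_field, hu0]
  field_simp
  ring

theorem tendsto_additionError_of_mem (hZ : IsZetaOf L Z) {w l : ℂ} (hw : w ∉ L.lattice)
    (hl : l ∈ L.lattice) : Tendsto (additionError L Z · w) (𝓝[≠] l) (𝓝 0) := by
  have hshift : Tendsto (· - l) (𝓝[≠] l) (𝓝[≠] (l - l)) := map_subRight_nhdsNE.le
  rw [sub_self] at hshift
  have hlw : l + w ∉ L.lattice := (L.lattice.add_mem_iff_right hl).not.2 hw
  have hev : ∀ᶠ v in 𝓝[≠] l, v + w ∉ L.lattice :=
    nhdsWithin_le_nhds ((continuous_add_const w).continuousAt.preimage_mem_nhds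
      (L.isClosed_lattice.isOpen_compl.mem_nhds hlw))
  refine ((hZ.tendsto_additionError_zero hw).comp hshift).congr' ?_
  filter_upwards [eventually_nhdsNE_notMem_lattice L l, hev] with v hv hvw
  rw [Function.comp_apply, sub_eq_add_neg, hZ.additionError_add_mem (L.lattice.neg_mem hl) hv hvw]

theorem exists_tendsto_additionError (hZ : IsZetaOf L Z) {w : ℂ} (hw : w ∉ L.lattice) (z : ℂ) :
    ∃ a, Tendsto (additionError L Z · w) (𝓝[≠] z) (𝓝 a) := by
  by_cases hz : z ∈ L.lattice
  · exact ⟨0, hZ.tendsto_additionError_of_mem hw hz⟩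
  by_cases hzw : z + w ∈ L.lattice
  · have hmem : -w - z ∈ L.lattice := by
      simpa [sub_eq_add_neg] using L.lattice.neg_mem hzw
    have hreflect : Tendsto (-w - ·) (𝓝[≠] z) (𝓝[≠] (-w - z)) := map_subLeft_nhdsNE.le
    exact ⟨0, ((hZ.tendsto_additionError_of_mem hw hmem).comp hreflect).congr
      fun v ↦ hZ.additionError_neg_sub v w⟩
  · exact ⟨_, (hZ.differentiableAt_additionError hz hzw).continuousAt.mono_left nhdsWithin_le_nhds⟩

theorem additionError_eq_zero (hZ : IsZetaOf L Z) {v w : ℂ} (hv : v ∉ L.lattice)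
    (hw : w ∉ L.lattice) (hvw : v + w ∉ L.lattice) : additionError L Z v w = 0 := by
  have hshift (z : ℂ) : Tendsto (· + w) (𝓝[≠] z) (𝓝[≠] (z + w)) := map_add_right_nhdsNE.le
  have hregular (z : ℂ) : ∀ᶠ x in 𝓝[≠] z, x ∉ L.lattice ∧ x + w ∉ L.lattice :=
    (eventually_nhdsNE_notMem_lattice L z).and
      ((hshift z).eventually (eventually_nhdsNE_notMem_lattice L (z + w)))
  obtain ⟨c, hc⟩ := exists_tendsto_nhdsNE_of_periodic L.lattice
    (fun z ↦ (hregular z).mono fun x hx ↦ hZ.differentiableAt_additionError hx.1 hx.2)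
    (hZ.exists_tendsto_additionError hw)
    (fun z l hl ↦ (hregular z).mono fun x hx ↦ hZ.additionError_add_mem hl hx.1 hx.2)
  have hv_lim := (hZ.differentiableAt_additionError hv hvw).continuousAt.mono_left
    (nhdsWithin_le_nhds (s := {v}ᶜ))
  exact (tendsto_nhds_unique hv_lim (hc v)).trans
    (tendsto_nhds_unique (hc 0) (hZ.tendsto_additionError_zero hw))

theorem additivityDefect_sq (hZ : IsZetaOf L Z) {v w : ℂ} (hv : v ∉ L.lattice)
    (hw : w ∉ L.lattice) (hvw : v + w ∉ L.lattice) :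
    additivityDefect Z v w ^ 2 = ℘[L] (v + w) + ℘[L] v + ℘[L] w :=
  sub_eq_zero.1 (hZ.additionError_eq_zero hv hw hvw)

theorem deriv_deriv_deriv_additivityDefect (hZ : IsZetaOf L Z) {v w : ℂ} (hv : v ∉ L.lattice)
    (hw : w ∉ L.lattice) (hvw : v + w ∉ L.lattice) :
    deriv (deriv (deriv (additivityDefect Z · w))) v =
      6 * deriv (additivityDefect Z · w) v * (additivityDefect Z v w ^ 2 - ℘[L] w) := by
  have hd₂ {x : ℂ} (hx : x ∉ L.lattice) (hxw : x + w ∉ L.lattice) :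
      HasDerivAt (deriv (additivityDefect Z · w)) (℘'[L] x - ℘'[L] (x + w)) x :=
    ((hasDerivAt_weierstrassP hx).sub
      ((hasDerivAt_weierstrassP hxw).comp_add_const x w)).congr_of_eventuallyEq <|
        (eventually_notMem_lattice_and_add hx hxw).mono fun y hy ↦
          (hZ.hasDerivAt_additivityDefect hy.1 hy.2).deriv
  have hd₃ := ((hasDerivAt_derivWeierstrassP hv).sub
    ((hasDerivAt_derivWeierstrassP hvw).comp_add_const v w)).congr_of_eventuallyEq <|
      (eventually_notMem_lattice_and_add hv hvw).mono fun y hy ↦ (hd₂ hy.1 hy.2).deriv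
  rw [hd₃.deriv, (hZ.hasDerivAt_additivityDefect hv hvw).deriv, hZ.additivityDefect_sq hv hw hvw]
  ring

end IsZetaOf

section SecondSymPower

variable {𝕜 : Type*} [NontriviallyNormedField 𝕜]

/-- The second symmetric power of the operator `y ↦ y'' - I y`, applied to `Φ` and evaluated at `z`:
it annihilates the products of two solutions of `y'' = I y`. -/
noncomputable def secondSymPower (I Φ : 𝕜 → 𝕜) (z : 𝕜) : 𝕜 :=
  deriv (deriv (deriv Φ)) z - 4 * I z * deriv Φ z - 2 * deriv I z * Φ z

theorem secondSymPower_comp_sub_const (I Φ : 𝕜 → 𝕜) (a z : 𝕜) :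
    secondSymPower (fun x ↦ I (x - a)) (fun x ↦ Φ (x - a)) z = secondSymPower I Φ (z - a) := by
  have hderiv (f : 𝕜 → 𝕜) : deriv (fun x ↦ f (x - a)) = fun x ↦ deriv f (x - a) :=
    funext (deriv_comp_sub_const f a)
  simp only [secondSymPower, hderiv]

theorem secondSymPower_sub_eq_zero [NeZero (2 : 𝕜)] {I f : 𝕜 → 𝕜} {A c z : 𝕜}
    (hf : DifferentiableAt 𝕜 f z)
    (hf₃ : deriv (deriv (deriv f)) z = 6 * deriv f z * (f z ^ 2 - c))
    (hI : ∀ᶠ x in 𝓝 z, I x = 3 / 4 * f x ^ 2 + A * f x + A ^ 2 - 3 / 2 * c) :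
    secondSymPower I (fun x ↦ f x - 2 * A) z = 0 := by
  have hd := hf.hasDerivAt
  have hdI : HasDerivAt I (3 / 4 * (2 * f z * deriv f z) + A * deriv f z) z := by
    refine HasDerivAt.congr_of_eventuallyEq ?_ hI
    simpa using (((((hd.pow 2).const_mul (3 / 4)).add (hd.const_mul A)).add_const (A ^ 2)).sub_const
      (3 / 2 * c))
  have hderiv : deriv (fun x ↦ f x - 2 * A) = deriv f := funext fun _ ↦ deriv_sub_const _
  have h4 : (4 : 𝕜) = 2 * 2 := by norm_num
  rw [secondSymPower, hderiv, hf₃, hdI.deriv, hI.self_of_nhds, h4]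
  field_simp
  ring

end SecondSymPower

theorem IsZetaOf.secondSymPower_additivityDefect {L : PeriodPair} {Z : ℂ → ℂ} (hZ : IsZetaOf L Z)
    (A : ℂ) {v w : ℂ} (hv : v ∉ L.lattice) (hw : w ∉ L.lattice) (hvw : v + w ∉ L.lattice) :
    secondSymPower
      (fun x ↦ 3 / 4 * (℘[L] (x + w) + ℘[L] x) + A * (Z (x + w) - Z x) +
        (A ^ 2 - Z w * A - 3 / 4 * ℘[L] w))
      (fun x ↦ additivityDefect Z x w - 2 * A) v = 0 := by
  refine secondSymPower_sub_eq_zero (hZ.hasDerivAt_additivityDefect hv hvw).differentiableAt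
    (hZ.deriv_deriv_deriv_additivityDefect hv hw hvw) ?_
  filter_upwards [eventually_notMem_lattice_and_add hv hvw] with x hx
  rw [hZ.additivityDefect_sq hx.1 hw hx.2, additivityDefect]
  ring

theorem even_elliptic_solution_example_general {L : PeriodPair} {Z : ℂ → ℂ} (hZ : IsZetaOf L Z)
    {A p B : ℂ} {Iz Φ : ℂ → ℂ} (hp : 2 * p ∉ L.lattice)
    (hB : B = A ^ 2 - Z (2 * p) * A - (3 / 4) * ℘[L] (2 * p))
    (hI : ∀ z, Iz z = (3 / 4) * (℘[L] (z + p) + ℘[L] (z - p)) + A * (Z (z + p) - Z (z - p)) + B)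
    (hΦ : ∀ z, Φ z = Z (z + p) - Z (z - p) - Z (2 * p) - 2 * A) :
    (∀ z, Φ (-z) = Φ z) ∧
    (∀ z, z + p ∉ L.lattice → z - p ∉ L.lattice → ∀ l ∈ L.lattice, Φ (z + l) = Φ z) ∧
    (∀ z, z + p ∉ L.lattice → z - p ∉ L.lattice → secondSymPower Iz Φ z = 0) := by
  have hshift (z : ℂ) : z + p = z - p + 2 * p := by ring
  have hΦ_defect (z : ℂ) : Φ z = additivityDefect Z (z - p) (2 * p) - 2 * A := by
    rw [hΦ, additivityDefect, hshift]
  refine ⟨fun z ↦ ?_, fun z hadd hsub l hl ↦ ?_, fun z hadd hsub ↦ ?_⟩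
  · have hreflect : -z - p = -(2 * p) - (z - p) := by ring
    rw [hΦ_defect, hΦ_defect, hreflect, additivityDefect_neg_sub hZ.neg]
  · rw [hΦ_defect, hΦ_defect, add_sub_right_comm,
      hZ.additivityDefect_add_mem hl hsub (hshift z ▸ hadd)]
  · simp only [hshift] at hI
    have hsymPower := hZ.secondSymPower_additivityDefect A hsub hp (hshift z ▸ hadd)
    rw [← secondSymPower_comp_sub_const] at hsymPower
    rw [funext hΦ_defect, funext hI, hB]
    exact hsymPower

section NormalizedPeriods

variable {τ : ℂ} (hτ : 0 < τ.im)

/-- The pair of periods `(1, τ)`, whose lattice is `Λ_τ = ℤ + τℤ`. -/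
noncomputable def normalizedPeriodPair : PeriodPair where
  ω₁ := 1
  ω₂ := τ
  indep := by
    refine (LinearIndependent.pair_iff' one_ne_zero).2 fun a ha ↦ hτ.ne ?_
    simpa using congrArg im ha

theorem mem_normalizedPeriodPair_lattice {z : ℂ} :
    z ∈ (normalizedPeriodPair hτ).lattice ↔ InLattice τ z := by
  simp only [PeriodPair.mem_lattice, normalizedPeriodPair, mul_one, InLattice, eq_comm]

theorem wp_eq_weierstrassP : wp τ = ℘[normalizedPeriodPair hτ] := by
  funext z
  set L := normalizedPeriodPair hτ with hL
  have hval (x : ℤ × ℤ) : (L.latticeEquivProd.symm x : ℂ) = x.1 + x.2 * τ := by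
    simp [L.latticeEquiv_symm_apply, hL, normalizedPeriodPair]
  rw [weierstrassP_eq_inv_sq_add, wp, PeriodPair.weierstrassPExcept,
    ← L.latticeEquivProd.symm.toEquiv.tsum_eq]
  congr 1
  refine (tsum_subtype {x : ℤ × ℤ | x ≠ 0} fun x ↦
    (z - ((x.1 : ℂ) + (x.2 : ℂ) * τ))⁻¹ ^ 2 - ((x.1 : ℂ) + (x.2 : ℂ) * τ)⁻¹ ^ 2).trans
      (tsum_congr fun x ↦ ?_)
  by_cases hx : x = 0
  · simp [hx]
  · simp [hx, ← hval]

theorem IsWeierstrassZeta.isZetaOf {zeta : ℂ → ℂ → ℂ} (hzeta : IsWeierstrassZeta zeta) :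
    IsZetaOf (normalizedPeriodPair hτ) (zeta τ) where
  neg := (hzeta τ hτ).1
  hasDerivAt z hz := by
    rw [← wp_eq_weierstrassP]
    exact (hzeta τ hτ).2.1 z ((mem_normalizedPeriodPair_lattice hτ).not.1 hz)
  tendsto_sub_inv := (hzeta τ hτ).2.2

end NormalizedPeriods

/-- Remark 2.8: for `n_k = 0` and `B = A² - ζ(2p)A - (3/4)℘(2p)`, the
function `Φ(z) = ζ(z+p) - ζ(z-p) - ζ(2p) - 2A` is an even elliptic solution of the second
symmetric power equation `Φ‴ - 4IΦ′ - 2I′Φ = 0`. -/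
theorem even_elliptic_solution_example
    (τ : ℂ) (hτ : 0 < τ.im) (A p : ℂ)
    (zeta : ℂ → ℂ → ℂ) (eta1 eta2 : ℂ → ℂ)
    (hzeta : IsWeierstrassZeta zeta) (heta1 : IsEta1 zeta eta1) (heta2 : IsEta2 zeta eta2)
    (hp : ¬ InLattice τ (2 * p))
    (B : ℂ) (hB : B = A ^ 2 - zeta τ (2 * p) * A - (3 / 4) * wp τ (2 * p))
    (Iz : ℂ → ℂ)
    (hI : ∀ z : ℂ, Iz z = (3 / 4) * (wp τ (z + p) + wp τ (z - p))
      + A * (zeta τ (z + p) - zeta τ (z - p)) + B)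
    (Φ : ℂ → ℂ)
    (hΦ : ∀ z : ℂ, Φ z = zeta τ (z + p) - zeta τ (z - p) - zeta τ (2 * p) - 2 * A) :
    (∀ z : ℂ, Φ (-z) = Φ z) ∧
    (∀ z : ℂ, ¬ InLattice τ (z + p) → ¬ InLattice τ (z - p) →
      Φ (z + 1) = Φ z ∧ Φ (z + τ) = Φ z) ∧
    (∀ z : ℂ, ¬ InLattice τ (z + p) → ¬ InLattice τ (z - p) →
      deriv (deriv (deriv Φ)) z - 4 * Iz z * deriv Φ z - 2 * deriv Iz z * Φ z = 0) := by
  simp only [← mem_normalizedPeriodPair_lattice hτ, wp_eq_weierstrassP hτ] at hp hB hI ⊢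
  obtain ⟨heven, hperiodic, hsymPower⟩ :=
    even_elliptic_solution_example_general (hzeta.isZetaOf hτ) hp hB hI hΦ
  exact ⟨heven, fun z hadd hsub ↦ ⟨hperiodic z hadd hsub 1 (PeriodPair.ω₁_mem_lattice _),
    hperiodic z hadd hsub τ (PeriodPair.ω₂_mem_lattice _)⟩, hsymPower⟩
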